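/- Let (X, d_m) be a metric space and let γ > 0 be a real number. Define d(x,y) = γ·(e^{d_m(x,y)} − 1) for all x,y ∈ X. Then d is a suprametric on X with constant ρ = 1/γ; in particular, d(x,y) ≤ d(x,z) + d(z,y) + (1/γ)·d(x,z)·d(z,y) for all x,y,z ∈ X, d(x,y) = 0 iff x = y, and d(x,y) = d(y,x). -/

import Mathlib

/-- A suprametric on `X` with constant `ρ`: a semimetric whose triangle inequality is relaxed by
the term `ρ * d x z * d z y`. The semimetric axioms are included as fields, as is `0 ≤ ρ`. -/
structure IsSuprametric {X : Type*} (ρ : ℝ) (d : X → X → ℝ) : Prop where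
  const_nonneg : 0 ≤ ρ
  nonneg : ∀ x y, 0 ≤ d x y
  eq_zero_iff : ∀ x y, d x y = 0 ↔ x = y
  symm : ∀ x y, d x y = d y x
  le_add_add_mul : ∀ x y z, d x y ≤ d x z + d z y + ρ * d x z * d z y

-- The substitution `s = γ * (a - 1)`, `t = γ * (b - 1)` turns the suprametric bound
-- `s + t + (1 / γ) * s * t` into `γ * (a * b - 1)`; for `a`, `b` exponentials of distances, the
-- bound is thus the exponentiated triangle inequality.
theorem mul_mul_sub_one_eq_add_add_mul {K : Type*} [Field K] {γ : K} (hγ : γ ≠ 0) (a b : K) :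
    γ * (a * b - 1) =
      γ * (a - 1) + γ * (b - 1) + (1 / γ) * (γ * (a - 1)) * (γ * (b - 1)) := by
  field_simp
  ring

theorem exp_dist_le_exp_dist_mul_exp_dist {X : Type*} [PseudoMetricSpace X] (x y z : X) :
    Real.exp (dist x z) ≤ Real.exp (dist x y) * Real.exp (dist y z) := by
  rw [← Real.exp_add]
  exact Real.exp_le_exp.mpr (dist_triangle x y z)

theorem mul_exp_dist_sub_one_le {X : Type*} [PseudoMetricSpace X] {γ : ℝ} (hγ : 0 < γ)
    (x y z : X) :
    γ * (Real.exp (dist x y) - 1) ≤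
      γ * (Real.exp (dist x z) - 1) + γ * (Real.exp (dist z y) - 1) +
        (1 / γ) * (γ * (Real.exp (dist x z) - 1)) * (γ * (Real.exp (dist z y) - 1)) :=
  calc
    γ * (Real.exp (dist x y) - 1)
        ≤ γ * (Real.exp (dist x z) * Real.exp (dist z y) - 1) := by
      gcongr
      exact exp_dist_le_exp_dist_mul_exp_dist x z y
    _ = _ := mul_mul_sub_one_eq_add_add_mul hγ.ne' _ _

theorem mul_exp_dist_sub_one_eq_zero_iff {X : Type*} [MetricSpace X] {γ : ℝ} (hγ : γ ≠ 0)
    {x y : X} : γ * (Real.exp (dist x y) - 1) = 0 ↔ x = y := by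
  rw [mul_eq_zero_iff_left hγ, sub_eq_zero, Real.exp_eq_one_iff, dist_eq_zero]

theorem isSuprametric_mul_exp_dist_sub_one {X : Type*} [MetricSpace X] {γ : ℝ} (hγ : 0 < γ) :
    IsSuprametric (1 / γ) fun x y : X => γ * (Real.exp (dist x y) - 1) where
  const_nonneg := one_div_nonneg.mpr hγ.le
  nonneg _ _ := mul_nonneg hγ.le (sub_nonneg.mpr (Real.one_le_exp dist_nonneg))
  eq_zero_iff _ _ := mul_exp_dist_sub_one_eq_zero_iff hγ.ne'
  symm x y := by rw [dist_comm]
  le_add_add_mul := mul_exp_dist_sub_one_le hγ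

/-- **Example.** If `(X, d_m)` is a metric space and `γ > 0`, then
`d (x, y) = γ * (e^{d_m (x, y)} - 1)` is a suprametric on `X` with constant
`ρ = 1 / γ`. -/
theorem exp_of_metric_is_suprametric
    {X : Type*} [MetricSpace X] (γ : ℝ) (hγ : 0 < γ) :
    (∀ x y z : X,
        γ * (Real.exp (dist x y) - 1) ≤
          γ * (Real.exp (dist x z) - 1) + γ * (Real.exp (dist z y) - 1) +
            (1 / γ) * (γ * (Real.exp (dist x z) - 1)) *
              (γ * (Real.exp (dist z y) - 1))) ∧
    (∀ x y : X, γ * (Real.exp (dist x y) - 1) = 0 ↔ x = y) ∧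
    (∀ x y : X, γ * (Real.exp (dist x y) - 1) = γ * (Real.exp (dist y x) - 1)) := by
  have h : IsSuprametric (1 / γ) fun x y : X => γ * (Real.exp (dist x y) - 1) :=
    isSuprametric_mul_exp_dist_sub_one hγ
  exact ⟨h.le_add_add_mul, h.eq_zero_iff, h.symm⟩
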